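/- arXiv:2103.00233 — 9 statements merged into one kernel-verified Lean document; each statement's English description precedes it below -/
import Mathlib

section
/- For every σ > 0, the function α ↦ ψ_G(α;σ) is differentiable on ℝ and its derivative at α equals −Φ((1−α)/σ), where Φ is the standard normal cumulative distribution function. In particular, ψ_G(·;σ) is monotonically decreasing (antitone) on ℝ. -/
open Real Set

/-- The probability density function of the standard normal distribution. -/
noncomputable def stdGaussPDF (v : ℝ) : ℝ :=
  (1 / Real.sqrt (2 * Real.pi)) * Real.exp (-v ^ 2 / 2)

/-- The cumulative distribution function of the standard normal distribution. -/
noncomputable def stdGaussCDF (v : ℝ) : ℝ :=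
  ∫ t in Set.Iic v, stdGaussPDF t

/-- The smooth Hinge loss ψ_G(α;σ) = Φ(v)(1−α) + φ(v)σ with v = (1−α)/σ. -/
noncomputable def psiG (σ α : ℝ) : ℝ :=
  stdGaussCDF ((1 - α) / σ) * (1 - α) + stdGaussPDF ((1 - α) / σ) * σ

theorem stdGauss_pdf_cont : Continuous stdGaussPDF := by
  unfold stdGaussPDF; fun_prop

theorem stdGauss_pdf_integrable : MeasureTheory.Integrable stdGaussPDF := by
  have h := (integrable_exp_neg_mul_sq (b := 1 / 2) (by norm_num)).const_mul
    (1 / Real.sqrt (2 * Real.pi))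
  refine h.congr (Filter.Eventually.of_forall fun v => ?_)
  simp only [stdGaussPDF]
  congr 2
  ring

theorem stdGauss_cdf_hasDerivAt (v : ℝ) : HasDerivAt stdGaussCDF (stdGaussPDF v) v := by
  have h : stdGaussCDF = fun u => (∫ t in (0:ℝ)..u, stdGaussPDF t) + stdGaussCDF 0 := by
    funext u
    have := intervalIntegral.integral_Iic_sub_Iic
      (stdGauss_pdf_integrable.integrableOn (s := Iic 0))
      (stdGauss_pdf_integrable.integrableOn (s := Iic u))
    rw [← this]
    simp [stdGaussCDF]
  rw [h]
  exact (intervalIntegral.integral_hasDerivAt_right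
    stdGauss_pdf_integrable.intervalIntegrable
    stdGauss_pdf_cont.stronglyMeasurable.stronglyMeasurableAtFilter
    stdGauss_pdf_cont.continuousAt).add_const _

theorem stdGauss_pdf_hasDerivAt (v : ℝ) : HasDerivAt stdGaussPDF (-v * stdGaussPDF v) v := by
  have h : HasDerivAt (fun v : ℝ => -v ^ 2 / 2) (-v) v := by
    have := ((hasDerivAt_pow 2 v).neg).div_const 2
    refine this.congr_deriv ?_
    norm_num
    ring
  have h2 := h.exp.const_mul (1 / Real.sqrt (2 * Real.pi))
  refine h2.congr_deriv ?_
  simp only [stdGaussPDF]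
  ring

theorem stdGauss_cdf_nonneg (v : ℝ) : 0 ≤ stdGaussCDF v := by
  unfold stdGaussCDF
  refine MeasureTheory.integral_nonneg fun t => ?_
  simp only [stdGaussPDF, Pi.zero_apply]
  positivity

theorem stmt_2 (σ : ℝ) (hσ : 0 < σ) :
    (∀ α : ℝ, HasDerivAt (psiG σ) (-(stdGaussCDF ((1 - α) / σ))) α) ∧
    Antitone (psiG σ) := by
  have key : ∀ α : ℝ, HasDerivAt (psiG σ) (-(stdGaussCDF ((1 - α) / σ))) α := by
    intro α
    have h1 : HasDerivAt (fun a : ℝ => 1 - a) (-1) α := by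
      simpa using (hasDerivAt_id α).const_sub 1
    have h2 : HasDerivAt (fun a : ℝ => (1 - a) / σ) (-1 / σ) α := h1.div_const σ
    have h3 := (stdGauss_cdf_hasDerivAt ((1 - α) / σ)).comp α h2
    have h4 := (stdGauss_pdf_hasDerivAt ((1 - α) / σ)).comp α h2
    have h5 := (h3.mul h1).add (h4.mul_const σ)
    refine h5.congr_deriv ?_
    simp only [Function.comp]
    field_simp
    ring
  refine ⟨key, antitone_of_deriv_nonpos (fun α => (key α).differentiableAt) fun α => ?_⟩
  rw [(key α).deriv]
  exact neg_nonpos.2 (stdGauss_cdf_nonneg _)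
end

section
/- For every σ > 0 and every α ∈ ℝ, 0 ≤ ψ_M(α;σ) − max{0, 1−α} ≤ σ/2. Moreover the upper bound is attained at α = 1, i.e. ψ_M(1;σ) = σ/2. -/
/-- Φ_M(v) = (1 + v/√(1+v²))/2. -/
noncomputable def PhiM (v : ℝ) : ℝ := (1 + v / Real.sqrt (1 + v ^ 2)) / 2

/-- φ_M(v) = 1/(2√(1+v²)). -/
noncomputable def phiM (v : ℝ) : ℝ := 1 / (2 * Real.sqrt (1 + v ^ 2))

/-- The smooth Hinge loss ψ_M(α;σ) = Φ_M(v)(1−α) + φ_M(v)σ with v = (1−α)/σ. -/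
noncomputable def psiM (σ α : ℝ) : ℝ :=
  PhiM ((1 - α) / σ) * (1 - α) + phiM ((1 - α) / σ) * σ

theorem psiM_eq (σ : ℝ) (hσ : 0 < σ) (v : ℝ) :
    psiM σ (1 - σ * v) = σ * (v + Real.sqrt (1 + v ^ 2)) / 2 := by
  have hs : 0 < Real.sqrt (1 + v ^ 2) := Real.sqrt_pos.mpr (by positivity)
  have h2 : Real.sqrt (1 + v ^ 2) ^ 2 = 1 + v ^ 2 := Real.sq_sqrt (by positivity)
  have hv : (1 - (1 - σ * v)) / σ = v := by field_simp; ring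
  unfold psiM PhiM phiM
  rw [hv]
  generalize Real.sqrt (1 + v ^ 2) = s at *
  field_simp
  linear_combination (-σ) * h2

theorem stmt_6 (σ : ℝ) (hσ : 0 < σ) :
    (∀ α : ℝ,
      0 ≤ psiM σ α - max 0 (1 - α) ∧
      psiM σ α - max 0 (1 - α) ≤ σ / 2) ∧
    psiM σ 1 = σ / 2 := by
  constructor
  · intro α
    obtain ⟨v, rfl⟩ : ∃ v, α = 1 - σ * v := ⟨(1 - α) / σ, by field_simp; ring⟩
    rw [psiM_eq σ hσ v]
    have h1 : |v| ≤ Real.sqrt (1 + v ^ 2) := Real.abs_le_sqrt (by linarith)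
    have h2 : Real.sqrt (1 + v ^ 2) ≤ 1 + |v| := by
      apply Real.sqrt_le_iff.mpr
      have := abs_nonneg v
      have := sq_abs v
      constructor <;> nlinarith
    have e : (1 : ℝ) - (1 - σ * v) = σ * v := by ring
    rw [e]
    rcases le_total 0 v with h | h
    · rw [max_eq_right (by positivity)]
      rw [abs_of_nonneg h] at h1 h2
      constructor <;> nlinarith
    · rw [max_eq_left (by nlinarith)]
      rw [abs_of_nonpos h] at h1 h2
      constructor <;> nlinarith
  · have := psiM_eq σ hσ 0
    simpa using this
end

section
/- The smooth Hinge loss ψ_M(α;σ) converges to the Hinge loss max{0,1−α} uniformly in α as σ → 0⁺; that is, for every ε > 0 there exists δ > 0 such that for all σ ∈ (0,δ) and all α ∈ ℝ, |ψ_M(α;σ) − max{0,1−α}| < ε. -/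
theorem stmt_7 :
    ∀ ε : ℝ, 0 < ε → ∃ δ : ℝ, 0 < δ ∧
      ∀ σ : ℝ, 0 < σ → σ < δ → ∀ α : ℝ, |psiM σ α - max 0 (1 - α)| < ε := by
  intro ε hε
  refine ⟨ε, hε, ?_⟩
  intro σ hσ hσε α
  obtain ⟨v, hv⟩ : ∃ v, v = (1 - α) / σ := ⟨_, rfl⟩
  have hα : 1 - α = v * σ := by rw [hv]; field_simp
  have hs2 : Real.sqrt (1 + v ^ 2) ^ 2 = 1 + v ^ 2 := Real.sq_sqrt (by positivity)
  have hs : 0 < Real.sqrt (1 + v ^ 2) := Real.sqrt_pos.mpr (by positivity)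
  have hpsi : psiM σ α = σ * (v + Real.sqrt (1 + v ^ 2)) / 2 := by
    unfold psiM PhiM phiM
    rw [← hv, hα]
    generalize Real.sqrt (1 + v ^ 2) = s at *
    field_simp
    linear_combination (-1 : ℝ) * hs2
  rw [hpsi, hα]
  generalize Real.sqrt (1 + v ^ 2) = s at *
  have h1 : |v| ≤ s := abs_le_of_sq_le_sq (by nlinarith) hs.le
  have h2 : s ≤ |v| + 1 := by
    have := abs_nonneg v
    have := sq_abs v
    nlinarith
  have h3 : max 0 (v * σ) = σ * (v + |v|) / 2 := by
    rcases le_total 0 v with h | h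
    · rw [max_eq_right (by positivity), abs_of_nonneg h]; ring
    · rw [max_eq_left (by nlinarith), abs_of_nonpos h]; ring
  rw [h3, abs_lt]
  constructor <;> nlinarith
end

section
/- Let θ ∈ ℝ, σ > 0, and let Φ_c, φ_c : ℝ → ℝ be differentiable functions with Φ_c'(v)·v + φ_c'(v) = 0 and Φ_c'(v) ≥ 0 for all v ∈ ℝ. Then the function ψ(α) = Φ_c(v)(θ−α) + φ_c(v)σ with v = (θ−α)/σ is convex on ℝ. -/
theorem stmt_9 (θ σ : ℝ) (hσ : 0 < σ) (Φc φc : ℝ → ℝ)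
    (hΦ : Differentiable ℝ Φc) (hφ : Differentiable ℝ φc)
    (hrel : ∀ v : ℝ, deriv Φc v * v + deriv φc v = 0)
    (hpos : ∀ v : ℝ, 0 ≤ deriv Φc v) :
    ConvexOn ℝ Set.univ
      (fun α : ℝ => Φc ((θ - α) / σ) * (θ - α) + φc ((θ - α) / σ) * σ) := by
  have hd : ∀ α : ℝ, HasDerivAt
      (fun α : ℝ => Φc ((θ - α) / σ) * (θ - α) + φc ((θ - α) / σ) * σ)
      (-Φc ((θ - α) / σ)) α := by
    intro α
    have h1 : HasDerivAt (fun α : ℝ => θ - α) (-1) α := (hasDerivAt_id' α).const_sub θ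
    have h2 : HasDerivAt (fun α : ℝ => (θ - α) / σ) (-1 / σ) α := h1.div_const σ
    have h3 : HasDerivAt (fun α : ℝ => Φc ((θ - α) / σ))
        (deriv Φc ((θ - α) / σ) * (-1 / σ)) α :=
      HasDerivAt.comp α (hΦ ((θ - α) / σ)).hasDerivAt h2
    have h4 : HasDerivAt (fun α : ℝ => φc ((θ - α) / σ))
        (deriv φc ((θ - α) / σ) * (-1 / σ)) α :=
      HasDerivAt.comp α (hφ ((θ - α) / σ)).hasDerivAt h2
    refine ((h3.mul h1).add (h4.mul_const σ)).congr_deriv ?_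
    have h5 : deriv φc ((θ - α) / σ) = -(deriv Φc ((θ - α) / σ) * ((θ - α) / σ)) := by
      linarith [hrel ((θ - α) / σ)]
    rw [h5]
    generalize deriv Φc ((θ - α) / σ) = d
    generalize Φc ((θ - α) / σ) = e
    field_simp
    ring
  apply Monotone.convexOn_univ_of_deriv (fun α => (hd α).differentiableAt)
  intro a b hab
  rw [(hd a).deriv, (hd b).deriv]
  apply neg_le_neg
  apply monotone_of_deriv_nonneg hΦ hpos
  gcongr
end

section
/- Let θ ∈ ℝ, σ > 0, γ > 0, and let Φ_c, φ_c : ℝ → ℝ be differentiable functions with Φ_c'(v)·v + φ_c'(v) = 0 for all v ∈ ℝ and Φ_c'(v) ≥ γσ for all v ∈ ℝ. Then ψ(α) = Φ_c(v)(θ−α) + φ_c(v)σ with v = (θ−α)/σ is γ-strongly convex: for all α, β ∈ ℝ, ψ(α) − ψ(β) ≥ ψ'(β)(α−β) + (γ/2)|α−β|². -/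
theorem stmt_10 (θ σ γ : ℝ) (hσ : 0 < σ) (hγ : 0 < γ) (Φc φc : ℝ → ℝ)
    (hΦ : Differentiable ℝ Φc) (hφ : Differentiable ℝ φc)
    (hrel : ∀ v : ℝ, deriv Φc v * v + deriv φc v = 0)
    (hlow : ∀ v : ℝ, γ * σ ≤ deriv Φc v)
    (ψ : ℝ → ℝ)
    (hψ : ∀ α : ℝ, ψ α = Φc ((θ - α) / σ) * (θ - α) + φc ((θ - α) / σ) * σ) :
    ∀ α β : ℝ, ψ α - ψ β ≥ deriv ψ β * (α - β) + (γ / 2) * |α - β| ^ 2 := by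
  have hv : ∀ a : ℝ, HasDerivAt (fun a : ℝ => (θ - a) / σ) (-1 / σ) a := fun a =>
    ((hasDerivAt_id a).const_sub θ).div_const σ
  have hP : ∀ a : ℝ, HasDerivAt (fun a : ℝ => Φc ((θ - a) / σ))
      (deriv Φc ((θ - a) / σ) * (-1 / σ)) a := fun a =>
    HasDerivAt.comp a (hΦ ((θ - a) / σ)).hasDerivAt (hv a)
  have hp : ∀ a : ℝ, HasDerivAt (fun a : ℝ => φc ((θ - a) / σ))
      (deriv φc ((θ - a) / σ) * (-1 / σ)) a := fun a =>
    HasDerivAt.comp a (hφ ((θ - a) / σ)).hasDerivAt (hv a)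
  have hd : ∀ a : ℝ, HasDerivAt ψ (-Φc ((θ - a) / σ)) a := by
    intro a
    have e : ψ = fun a => Φc ((θ - a) / σ) * (θ - a) + φc ((θ - a) / σ) * σ := funext hψ
    rw [e]
    have h := ((hP a).mul ((hasDerivAt_id a).const_sub θ)).add ((hp a).mul_const σ)
    refine h.congr_deriv ?_
    have r := hrel ((θ - a) / σ)
    have r2 : deriv φc ((θ - a) / σ) = - (deriv Φc ((θ - a) / σ) * ((θ - a) / σ)) := by linarith
    rw [r2]
    simp only [id]
    field_simp
    ring
  have hm : Monotone (fun a : ℝ => -Φc ((θ - a) / σ) - γ * a) := by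
    have hg : ∀ a : ℝ, HasDerivAt (fun a : ℝ => -Φc ((θ - a) / σ) - γ * a)
        (-(deriv Φc ((θ - a) / σ) * (-1 / σ)) - γ * 1) a := fun a =>
      (hP a).neg.sub ((hasDerivAt_id a).const_mul γ)
    refine monotone_of_deriv_nonneg (fun a => (hg a).differentiableAt) fun a => ?_
    rw [(hg a).deriv]
    have := (le_div_iff₀ hσ).2 (hlow ((θ - a) / σ))
    have e : -(deriv Φc ((θ - a) / σ) * (-1 / σ)) = deriv Φc ((θ - a) / σ) / σ := by ring
    rw [e]; linarith
  intro α β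
  rw [(hd β).deriv, sq_abs]
  have hh : ∀ a : ℝ, HasDerivAt (fun a => ψ a - γ / 2 * a ^ 2)
      (-Φc ((θ - a) / σ) - γ * a) a := fun a =>
    ((hd a).sub ((hasDerivAt_pow 2 a).const_mul (γ / 2))).congr_deriv (by simp; ring)
  have hc : Continuous (fun a => ψ a - γ / 2 * a ^ 2) :=
    continuous_iff_continuousAt.2 fun a => (hh a).continuousAt
  rcases lt_trichotomy α β with h | h | h
  · obtain ⟨c, hc1, hc2⟩ := exists_hasDerivAt_eq_slope _ _ h hc.continuousOn (fun x _ => hh x)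
    have m := hm hc1.2.le
    rw [eq_div_iff (by linarith)] at hc2
    simp only at m
    nlinarith [mul_le_mul_of_nonneg_right m (sub_pos.2 h).le]
  · subst h; simp
  · obtain ⟨c, hc1, hc2⟩ := exists_hasDerivAt_eq_slope _ _ h hc.continuousOn (fun x _ => hh x)
    have m := hm hc1.1.le
    rw [eq_div_iff (by linarith)] at hc2
    simp only at m
    nlinarith [mul_le_mul_of_nonneg_right m (sub_pos.2 h).le]
end

section
/- Let θ ∈ ℝ, σ > 0, μ > 0, and let Φ_c, φ_c : ℝ → ℝ be differentiable functions with Φ_c'(v)·v + φ_c'(v) = 0 and 0 ≤ Φ_c'(v) ≤ μσ for all v ∈ ℝ. Then ψ(α) = Φ_c(v)(θ−α) + φ_c(v)σ with v = (θ−α)/σ is μ-smooth: |ψ'(α) − ψ'(β)| ≤ μ|α−β| for all α, β ∈ ℝ. -/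
theorem stmt_11 (θ σ μ : ℝ) (hσ : 0 < σ) (hμ : 0 < μ) (Φc φc : ℝ → ℝ)
    (hΦ : Differentiable ℝ Φc) (hφ : Differentiable ℝ φc)
    (hrel : ∀ v : ℝ, deriv Φc v * v + deriv φc v = 0)
    (hpos : ∀ v : ℝ, 0 ≤ deriv Φc v) (hup : ∀ v : ℝ, deriv Φc v ≤ μ * σ)
    (ψ : ℝ → ℝ)
    (hψ : ∀ α : ℝ, ψ α = Φc ((θ - α) / σ) * (θ - α) + φc ((θ - α) / σ) * σ) :
    ∀ α β : ℝ, |deriv ψ α - deriv ψ β| ≤ μ * |α - β| := by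
  have hd : ∀ α, deriv ψ α = -Φc ((θ - α) / σ) := by
    intro α
    have h0 : HasDerivAt (fun a : ℝ => θ - a) (-1) α := (hasDerivAt_id α).const_sub θ
    have hv : HasDerivAt (fun a : ℝ => (θ - a) / σ) (-1 / σ) α := h0.div_const σ
    have h1 : HasDerivAt (fun a : ℝ => Φc ((θ - a) / σ))
        (deriv Φc ((θ - α) / σ) * (-1 / σ)) α :=
      HasDerivAt.comp α (hΦ ((θ - α) / σ)).hasDerivAt hv
    have h2 : HasDerivAt (fun a : ℝ => φc ((θ - a) / σ))
        (deriv φc ((θ - α) / σ) * (-1 / σ)) α :=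
      HasDerivAt.comp α (hφ ((θ - α) / σ)).hasDerivAt hv
    have h3 : HasDerivAt (fun a : ℝ => Φc ((θ - a) / σ) * (θ - a) + φc ((θ - a) / σ) * σ) _ α :=
      (h1.mul h0).add (h2.mul_const σ)
    rw [show ψ = _ from funext hψ, h3.deriv]
    have hs : σ * σ⁻¹ = 1 := mul_inv_cancel₀ hσ.ne'
    have hr := hrel ((θ - α) / σ)
    have e : deriv φc ((θ - α) / σ) * (-1 / σ) * σ = - deriv φc ((θ - α) / σ) := by
      field_simp
    rw [e]
    have e2 : deriv Φc ((θ - α) / σ) * (-1 / σ) * (θ - α)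
        = -(deriv Φc ((θ - α) / σ) * ((θ - α) / σ)) := by ring
    rw [e2]
    linarith
  intro α β
  have hL := Convex.norm_image_sub_le_of_norm_deriv_le (𝕜 := ℝ) (f := Φc) (C := μ * σ)
    (s := Set.univ) (x := (θ - α) / σ) (y := (θ - β) / σ)
    (fun x _ => hΦ x) (fun x _ => by
      rw [Real.norm_eq_abs, abs_of_nonneg (hpos x)]; exact hup x)
    convex_univ (Set.mem_univ _) (Set.mem_univ _)
  rw [Real.norm_eq_abs, Real.norm_eq_abs] at hL
  have e1 : (θ - β) / σ - (θ - α) / σ = (α - β) / σ := by ring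
  have e2 : μ * σ * (|α - β| / σ) = μ * |α - β| := by field_simp
  rw [e1, abs_div, abs_of_pos hσ, e2] at hL
  rw [hd, hd, show -Φc ((θ - α) / σ) - -Φc ((θ - β) / σ)
    = Φc ((θ - β) / σ) - Φc ((θ - α) / σ) by ring]
  exact hL
end

section
/- Let θ ∈ ℝ, σ > 0, and let Φ_c, φ_c : ℝ → ℝ be differentiable functions with Φ_c'(v)·v + φ_c'(v) = 0 for all v ∈ ℝ and Φ_c(θ/σ) > 0. Then ψ(α) = Φ_c(v)(θ−α) + φ_c(v)σ with v = (θ−α)/σ is differentiable at 0 with ψ'(0) = −Φ_c(θ/σ) < 0 (which, with convexity, is the Bartlett criterion for ψ to be classification-calibrated). -/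
theorem stmt_12 (θ σ : ℝ) (hσ : 0 < σ) (Φc φc : ℝ → ℝ)
    (hΦ : Differentiable ℝ Φc) (hφ : Differentiable ℝ φc)
    (hrel : ∀ v : ℝ, deriv Φc v * v + deriv φc v = 0)
    (hcal : 0 < Φc (θ / σ)) :
    HasDerivAt (fun α : ℝ => Φc ((θ - α) / σ) * (θ - α) + φc ((θ - α) / σ) * σ)
      (-Φc (θ / σ)) 0 ∧ -Φc (θ / σ) < 0 := by
  refine ⟨?_, by linarith⟩
  have h1 : HasDerivAt (fun α : ℝ => θ - α) (-1) 0 := by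
    simpa using (hasDerivAt_id (0:ℝ)).const_sub θ
  have h2 : HasDerivAt (fun α : ℝ => (θ - α) / σ) (-1 / σ) 0 := h1.div_const σ
  have e : (θ - 0) / σ = θ / σ := by rw [sub_zero]
  have h3 : HasDerivAt (fun α : ℝ => Φc ((θ - α) / σ)) (deriv Φc (θ / σ) * (-1 / σ)) 0 :=
    HasDerivAt.comp (h₂ := Φc) (0:ℝ) (by rw [e]; exact (hΦ _).hasDerivAt) h2
  have h4 : HasDerivAt (fun α : ℝ => φc ((θ - α) / σ)) (deriv φc (θ / σ) * (-1 / σ)) 0 :=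
    HasDerivAt.comp (h₂ := φc) (0:ℝ) (by rw [e]; exact (hφ _).hasDerivAt) h2
  have h5 := (h3.mul h1).add (h4.mul_const σ)
  refine h5.congr_deriv ?_
  have hr := hrel (θ / σ)
  have hd : deriv φc (θ / σ) = -(deriv Φc (θ / σ) * (θ / σ)) := by linarith
  rw [hd, e, sub_zero]
  have hs := hσ.ne'
  generalize deriv Φc (θ / σ) = a
  generalize Φc (θ / σ) = b
  field_simp
  ring
end

section
/- Let θ ∈ ℝ, σ > 0, and let Φ_c, φ_c : ℝ → ℝ be differentiable functions with Φ_c'(v)·v + φ_c'(v) = 0 and Φ_c'(v) ≥ 0 for all v ∈ ℝ, and define ψ(α) = Φ_c(v)(θ−α) + φ_c(v)σ with v = (θ−α)/σ. Let β ∈ ℝ and suppose v⋆ ∈ ℝ satisfies Φ_c(v⋆) = −β. Then for all α ∈ ℝ, βα − ψ(α) ≤ βθ − φ_c(v⋆)σ, with equality when α = θ − σv⋆; consequently the convex conjugate of ψ satisfies ψ*(β) = sup_α(βα − ψ(α)) = βθ − φ_c(v⋆)σ. -/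
theorem stmt_13 (θ σ : ℝ) (hσ : 0 < σ) (Φc φc : ℝ → ℝ)
    (hΦ : Differentiable ℝ Φc) (hφ : Differentiable ℝ φc)
    (hrel : ∀ v : ℝ, deriv Φc v * v + deriv φc v = 0)
    (hpos : ∀ v : ℝ, 0 ≤ deriv Φc v)
    (ψ : ℝ → ℝ)
    (hψ : ∀ α : ℝ, ψ α = Φc ((θ - α) / σ) * (θ - α) + φc ((θ - α) / σ) * σ)
    (β vstar : ℝ) (hvstar : Φc vstar = -β) :
    (∀ α : ℝ, β * α - ψ α ≤ β * θ - φc vstar * σ) ∧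
    (β * (θ - σ * vstar) - ψ (θ - σ * vstar) = β * θ - φc vstar * σ) ∧
    (⨆ α : ℝ, (β * α - ψ α)) = β * θ - φc vstar * σ := by
  have hmono : Monotone Φc := monotone_of_deriv_nonneg hΦ hpos
  have hd : ∀ v, HasDerivAt (fun v => (Φc v + β) * v + φc v) (Φc v + β) v := by
    intro v
    have h := ((((hΦ v).hasDerivAt).add_const β).mul (hasDerivAt_id v)).add (hφ v).hasDerivAt
    refine h.congr_deriv ?_
    have := hrel v
    simp only [id]
    linarith
  have hdiff : Differentiable ℝ (fun v => (Φc v + β) * v + φc v) :=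
    fun v => (hd v).differentiableAt
  have key : ∀ v, φc vstar ≤ (Φc v + β) * v + φc v := by
    intro v
    have h0 : (Φc vstar + β) * vstar + φc vstar = φc vstar := by rw [hvstar]; ring
    rcases le_total vstar v with h | h
    · have hm : MonotoneOn (fun v => (Φc v + β) * v + φc v) (Set.Ici vstar) := by
        apply monotoneOn_of_deriv_nonneg (convex_Ici _) hdiff.continuous.continuousOn
          hdiff.differentiableOn
        intro x hx
        rw [(hd x).deriv]
        have := hmono (interior_subset hx : x ∈ Set.Ici vstar)
        linarith
      have := hm Set.self_mem_Ici h h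
      simp only at this
      linarith
    · have hm : AntitoneOn (fun v => (Φc v + β) * v + φc v) (Set.Iic vstar) := by
        apply antitoneOn_of_deriv_nonpos (convex_Iic _) hdiff.continuous.continuousOn
          hdiff.differentiableOn
        intro x hx
        rw [(hd x).deriv]
        have := hmono (interior_subset hx : x ∈ Set.Iic vstar)
        linarith
      have := hm h Set.self_mem_Iic h
      simp only at this
      linarith
  have h1 : ∀ α : ℝ, β * α - ψ α ≤ β * θ - φc vstar * σ := by
    intro α
    have hk := mul_le_mul_of_nonneg_right (key ((θ - α) / σ)) hσ.le
    have hv : (θ - α) / σ * σ = θ - α := div_mul_cancel₀ _ hσ.ne'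
    have e : ((Φc ((θ - α) / σ) + β) * ((θ - α) / σ) + φc ((θ - α) / σ)) * σ
        = (Φc ((θ - α) / σ) + β) * (θ - α) + φc ((θ - α) / σ) * σ := by
      rw [add_mul, mul_assoc, hv]
    rw [hψ]
    linarith
  have h2 : β * (θ - σ * vstar) - ψ (θ - σ * vstar) = β * θ - φc vstar * σ := by
    have hv : (θ - (θ - σ * vstar)) / σ = vstar := by field_simp; ring
    rw [hψ, hv, hvstar]
    ring
  refine ⟨h1, h2, le_antisymm (ciSup_le h1) ?_⟩
  rw [← h2]
  exact le_ciSup (f := fun α => β * α - ψ α) ⟨_, Set.forall_mem_range.2 h1⟩ (θ - σ * vstar)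
end

section
/- Let θ ∈ ℝ, σ > 0, and let Φ_c, φ_c : ℝ → ℝ be differentiable functions with Φ_c'(v)·v + φ_c'(v) = 0 and Φ_c'(v) ≥ 0 for all v ∈ ℝ, and additionally Φ_c(v) ≥ 0 for all v. If v : ℝ → ℝ is convex and differentiable, then the composite function ψ_v(α) = Φ_c(v(α))·v(α) + φ_c(v(α)) is convex on ℝ. -/
theorem stmt_14 (Φc φc : ℝ → ℝ)
    (hΦ : Differentiable ℝ Φc) (hφ : Differentiable ℝ φc)
    (hrel : ∀ u : ℝ, deriv Φc u * u + deriv φc u = 0)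
    (hderpos : ∀ u : ℝ, 0 ≤ deriv Φc u)
    (hΦpos : ∀ u : ℝ, 0 ≤ Φc u)
    (v : ℝ → ℝ) (hvconv : ConvexOn ℝ Set.univ v) (hvdiff : Differentiable ℝ v) :
    ConvexOn ℝ Set.univ (fun α : ℝ => Φc (v α) * v α + φc (v α)) := by
  have hd : ∀ u, HasDerivAt (fun u => Φc u * u + φc u) (Φc u) u := by
    intro u
    have h := (((hΦ u).hasDerivAt.mul (hasDerivAt_id u)).add (hφ u).hasDerivAt)
    refine h.congr_deriv ?_
    have := hrel u
    simp only [id]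
    linarith
  have hmonoΦ : Monotone Φc := monotone_of_deriv_nonneg hΦ hderpos
  have hder : deriv (fun u => Φc u * u + φc u) = Φc := funext fun u => (hd u).deriv
  have hdiff : Differentiable ℝ (fun u => Φc u * u + φc u) :=
    fun u => (hd u).differentiableAt
  have hmono : Monotone (fun u => Φc u * u + φc u) :=
    monotone_of_deriv_nonneg hdiff (fun u => by rw [hder]; exact hΦpos u)
  have hconv : ConvexOn ℝ Set.univ (fun u => Φc u * u + φc u) :=
    Monotone.convexOn_univ_of_deriv hdiff (by rw [hder]; exact hmonoΦ)
  refine ⟨convex_univ, fun x _ y _ a b ha hb hab => ?_⟩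
  exact (hmono (hvconv.2 (Set.mem_univ x) (Set.mem_univ y) ha hb hab)).trans
    (hconv.2 (Set.mem_univ (v x)) (Set.mem_univ (v y)) ha hb hab)
end
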